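/- Let e be the 4×4 complex matrix !![0,0,0,0; 0,1,-1,0; 0,-1,1,0; 0,0,0,0], let e₁ = e ⊗ 1₂ and e₂ = 1₂ ⊗ e be the 8×8 Kronecker embeddings, let f(u) = u/(1-u), and define Ř₁(u) = 1₈ + f(u)·e₁ and Ř₂(u) = 1₈ + f(u)·e₂. Then for all complex u, v with u ≠ 1, v ≠ 1, and u + v ≠ 1, the braid-form Yang–Baxter equation holds: Ř₁(u) · Ř₂(u+v) · Ř₁(v) = Ř₂(v) · Ř₁(u+v) · Ř₂(u). -/

import Mathlib

/-! The generators satisfy the Temperley–Lieb relations with loop value `2`: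
`eᵢ² = 2 eᵢ`, `e₁ e₂ e₁ = e₁` and `e₂ e₁ e₂ = e₂`. These are identities of integer matrices, so they
are decided over `ℤ` and transported to `ℂ`. Expanding both sides of the Yang–Baxter equation with
them, the terms in `e₁ e₂` and `e₂ e₁` agree, and the difference of the two sides is
`(f u + f v + 2 f u f v + f u f v f (u+v) - f (u+v)) (e₁ - e₂)`.
The scalar vanishes for `f u = u / (1 - u)` away from its poles. -/

open Matrix

namespace Stmt10

/-- The two-particle contact Temperley–Lieb generator. -/
def e : Matrix (Fin 4) (Fin 4) ℂ :=
  !![0, 0, 0, 0; 0, 1, -1, 0; 0, -1, 1, 0; 0, 0, 0, 0]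

/-- `e₁ = e ⊗ 1₂` as an 8×8 matrix (Kronecker product). -/
def e₁ : Matrix (Fin 8) (Fin 8) ℂ :=
  Matrix.reindex finProdFinEquiv finProdFinEquiv
    (Matrix.kronecker e (1 : Matrix (Fin 2) (Fin 2) ℂ))

/-- `e₂ = 1₂ ⊗ e` as an 8×8 matrix (Kronecker product). -/
def e₂ : Matrix (Fin 8) (Fin 8) ℂ :=
  Matrix.reindex finProdFinEquiv finProdFinEquiv
    (Matrix.kronecker (1 : Matrix (Fin 2) (Fin 2) ℂ) e)

/-- Rational Baxterization function. -/
noncomputable def f (u : ℂ) : ℂ := u / (1 - u)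

/-- Braid-form Baxterized R-matrix on the first pair. -/
noncomputable def Rb₁ (u : ℂ) : Matrix (Fin 8) (Fin 8) ℂ := 1 + f u • e₁

/-- Braid-form Baxterized R-matrix on the second pair. -/
noncomputable def Rb₂ (u : ℂ) : Matrix (Fin 8) (Fin 8) ℂ := 1 + f u • e₂

/-- The integer matrix underlying `e`. -/
def eInt : Matrix (Fin 4) (Fin 4) ℤ :=
  !![0, 0, 0, 0; 0, 1, -1, 0; 0, -1, 1, 0; 0, 0, 0, 0]

/-- The integer matrix underlying `e₁`, in the same Kronecker indexing. -/
def e₁Int : Matrix (Fin 8) (Fin 8) ℤ :=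
  Matrix.reindex finProdFinEquiv finProdFinEquiv
    (Matrix.kronecker eInt (1 : Matrix (Fin 2) (Fin 2) ℤ))

/-- The integer matrix underlying `e₂`, in the same Kronecker indexing. -/
def e₂Int : Matrix (Fin 8) (Fin 8) ℤ :=
  Matrix.reindex finProdFinEquiv finProdFinEquiv
    (Matrix.kronecker (1 : Matrix (Fin 2) (Fin 2) ℤ) eInt)

lemma e_apply (i j : Fin 4) : e i j = (eInt i j : ℂ) := by
  fin_cases i <;> fin_cases j <;> simp [e, eInt]

lemma e₁_eq : e₁ = (Int.castRingHom ℂ).mapMatrix e₁Int := by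
  ext i j
  simp [e₁, e₁Int, e_apply, Matrix.one_apply]

lemma e₂_eq : e₂ = (Int.castRingHom ℂ).mapMatrix e₂Int := by
  ext i j
  simp [e₂, e₂Int, e_apply, Matrix.one_apply]

lemma e₁_sq : e₁ * e₁ = (2 : ℂ) • e₁ := by
  have h : e₁Int * e₁Int = e₁Int + e₁Int := by decide +kernel
  rw [two_smul, e₁_eq, ← map_mul, h, map_add]

lemma e₂_sq : e₂ * e₂ = (2 : ℂ) • e₂ := by
  have h : e₂Int * e₂Int = e₂Int + e₂Int := by decide +kernel
  rw [two_smul, e₂_eq, ← map_mul, h, map_add]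

lemma e₁_e₂_e₁ : e₁ * e₂ * e₁ = e₁ := by
  have h : e₁Int * e₂Int * e₁Int = e₁Int := by decide +kernel
  rw [e₁_eq, e₂_eq, ← map_mul, ← map_mul, h]

lemma e₂_e₁_e₂ : e₂ * e₁ * e₂ = e₂ := by
  have h : e₂Int * e₁Int * e₂Int = e₂Int := by decide +kernel
  rw [e₁_eq, e₂_eq, ← map_mul, ← map_mul, h]

/-- The functional equation that makes `f` a Baxterization for loop value `2`. -/
lemma f_add (u v : ℂ) (hu : u ≠ 1) (hv : v ≠ 1) (huv : u + v ≠ 1) :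
    f (u + v) = f u + f v + 2 * (f u * f v) + f u * f v * f (u + v) := by
  have h1 : 1 - u ≠ 0 := sub_ne_zero.mpr hu.symm
  have h2 : 1 - v ≠ 0 := sub_ne_zero.mpr hv.symm
  have h3 : 1 - (u + v) ≠ 0 := sub_ne_zero.mpr huv.symm
  simp only [f]
  field_simp
  ring

/-- Yang–Baxter for `1 + a x` and `1 + a y`, where `x` and `y` satisfy the Temperley–Lieb relations
with loop value `2` and the parameters satisfy the functional equation of `f_add`. -/
lemma yang_baxter_of_temperleyLieb {A : Type*} [Ring A] [Algebra ℂ A] {x y : A} {a b c : ℂ}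
    (hx : x * x = (2 : ℂ) • x) (hy : y * y = (2 : ℂ) • y)
    (hxyx : x * y * x = x) (hyxy : y * x * y = y)
    (hc : c = a + b + 2 * (a * b) + a * b * c) :
    (1 + a • x) * (1 + c • y) * (1 + b • x) = (1 + b • y) * (1 + c • x) * (1 + a • y) := by
  have hl : (1 + a • x) * (1 + c • y) * (1 + b • x) =
      1 + (a + b + 2 * (a * b) + a * b * c) • x + c • y + (a * c) • (x * y)
        + (b * c) • (y * x) := by
    simp only [add_mul, mul_add, one_mul, mul_one, smul_mul_assoc, mul_smul_comm, hx, hxyx]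
    module
  have hr : (1 + b • y) * (1 + c • x) * (1 + a • y) =
      1 + (a + b + 2 * (a * b) + a * b * c) • y + c • x + (a * c) • (x * y)
        + (b * c) • (y * x) := by
    simp only [add_mul, mul_add, one_mul, mul_one, smul_mul_assoc, mul_smul_comm, hy, hyxy]
    module
  rw [hl, hr, ← hc]
  abel

/-- The braid-form Yang–Baxter equation for the Baxterized contact R-matrix:
`Rb₁(u) Rb₂(u+v) Rb₁(v) = Rb₂(v) Rb₁(u+v) Rb₂(u)` for `u ≠ 1`, `v ≠ 1`, `u + v ≠ 1`. -/
theorem stmt_10 (u v : ℂ) (hu : u ≠ 1) (hv : v ≠ 1) (huv : u + v ≠ 1) :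
    Rb₁ u * Rb₂ (u + v) * Rb₁ v = Rb₂ v * Rb₁ (u + v) * Rb₂ u := by
  exact yang_baxter_of_temperleyLieb e₁_sq e₂_sq e₁_e₂_e₁ e₂_e₁_e₂ (f_add u v hu hv huv)

end Stmt10
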